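/- Let X and Y be measurable spaces, ν̂ a probability kernel from Y to X, and π a probability measure on X × Y. Let φ₀ : X × Y → ℝ be a bounded measurable ν̂-normalized function and define the probability kernel μ̂ by μ̂^y(dx) = e^{φ₀(x,y)} ν̂^y(dx). Then IG(π, μ̂) = −∫ φ₀ dπ + IG(π, ν̂); equivalently, H^{μ̂}(π) = ∫ φ₀ dπ + H^{ν̂}(π). -/

import Mathlib

open MeasureTheory ENNReal ProbabilityTheory

noncomputable section
open scoped Classical

/-- The extended-real integral `∫ f⁺ dμ − ∫ f⁻ dμ`, valued in `EReal`. -/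
def eInt {α : Type*} [MeasurableSpace α] (μ : Measure α) (f : α → ℝ) : EReal :=
  ((∫⁻ x, ENNReal.ofReal (f x) ∂μ : ℝ≥0∞) : EReal)
    - ((∫⁻ x, ENNReal.ofReal (-f x) ∂μ : ℝ≥0∞) : EReal)

/-- The extended integral of `f` with respect to `μ` is well defined (not `+∞ − ∞`). -/
def IntWellDef {α : Type*} [MeasurableSpace α] (μ : Measure α) (f : α → ℝ) : Prop :=
  (∫⁻ x, ENNReal.ofReal (f x) ∂μ ≠ ⊤) ∨ (∫⁻ x, ENNReal.ofReal (-f x) ∂μ ≠ ⊤)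

/-- Kullback–Leibler divergence `D_KL(μ | ν) = ∫ log (dμ/dν) dμ` if `μ ≪ ν`, `+∞` otherwise. -/
def KL {α : Type*} [MeasurableSpace α] (μ ν : Measure α) : EReal :=
  if μ ≪ ν then eInt μ (fun x => Real.log ((μ.rnDeriv ν x).toReal)) else ⊤

/-- `S^ν(P) = −sup{∫ c dP : c measurable, ∫ e^c dν = 1, ∫ c dP well defined}`. -/
def SEnt {X : Type*} [MeasurableSpace X] (ν P : Measure X) : EReal :=
  - sSup { r : EReal | ∃ c : X → ℝ, Measurable c ∧ (∫ x, Real.exp (c x) ∂ν) = 1 ∧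
      IntWellDef P c ∧ r = eInt P c }

/-- `H^{ν̂}(π)`: entropy of `π` relative to the probability kernel `ν̂ = κ`, i.e. minus the
supremum of `∫ c dπ` over `κ`-normalized measurable functions with well-defined integral. -/
def Hker {X Y : Type*} [MeasurableSpace X] [MeasurableSpace Y]
    (κ : Kernel Y X) (π : Measure (X × Y)) : EReal :=
  - sSup { r : EReal | ∃ c : X × Y → ℝ, Measurable c ∧
      (∀ y, (∫ x, Real.exp (c (x, y)) ∂(κ y)) = 1) ∧ IntWellDef π c ∧ r = eInt π c }

/-- `H^ν(π)`: entropy of `π` relative to an a priori probability `ν` on `X`. -/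
def Hnu {X Y : Type*} [MeasurableSpace X] [MeasurableSpace Y]
    (ν : Measure X) (π : Measure (X × Y)) : EReal :=
  - sSup { r : EReal | ∃ c : X × Y → ℝ, Measurable c ∧
      (∀ y, (∫ x, Real.exp (c (x, y)) ∂ν) = 1) ∧ IntWellDef π c ∧ r = eInt π c }

/-- The probability `ν̂ dQ` on `X × Y`, defined by
`∫ f d(ν̂ dQ) = ∫_Y ∫_X f(x,y) dν̂^y(x) dQ(y)`. -/
def kernMeas {X Y : Type*} [MeasurableSpace X] [MeasurableSpace Y]
    (κ : Kernel Y X) (Q : Measure Y) : Measure (X × Y) :=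
  (Q.compProd κ).map Prod.swap

/-!
Adding a `π`-integrable function `φ` to `c` shifts `∫ c dπ` by `∫ φ dπ` and does not change whether
the integral is well defined. Since `∫ e^c dμ̂^y = ∫ e^{c + φ} dν̂^y`, the bijection `c ↦ c + φ`
carries the `μ̂`-normalized functions onto the `ν̂`-normalized ones. Hence the supremum
defining `H^{μ̂}(π)` is the one defining `H^{ν̂}(π)` shifted by `-∫ φ dπ`.
-/

section ExtendedIntegral

variable {α : Type*} [MeasurableSpace α] {μ : Measure α} {f φ : α → ℝ}

lemma lintegral_ofReal_add_ne_top (hf : ∫⁻ x, ENNReal.ofReal (f x) ∂μ ≠ ⊤)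
    (hφ : Integrable φ μ) : ∫⁻ x, ENNReal.ofReal ((f + φ) x) ∂μ ≠ ⊤ := by
  refine ne_top_of_le_ne_top (add_ne_top.2 ⟨hf, hφ.lintegral_lt_top.ne⟩) ?_
  rw [← lintegral_add_right' _ hφ.aemeasurable.ennreal_ofReal]
  exact lintegral_mono fun x ↦ ofReal_add_le

lemma lintegral_ofReal_add_ne_top_iff (hφ : Integrable φ μ) :
    ∫⁻ x, ENNReal.ofReal ((f + φ) x) ∂μ ≠ ⊤ ↔ ∫⁻ x, ENNReal.ofReal (f x) ∂μ ≠ ⊤ := by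
  refine ⟨fun h ↦ ?_, fun h ↦ lintegral_ofReal_add_ne_top h hφ⟩
  simpa only [add_neg_cancel_right] using lintegral_ofReal_add_ne_top h hφ.neg

lemma lintegral_ofReal_neg_add_ne_top_iff (hφ : Integrable φ μ) :
    ∫⁻ x, ENNReal.ofReal (-(f + φ) x) ∂μ ≠ ⊤ ↔ ∫⁻ x, ENNReal.ofReal (-f x) ∂μ ≠ ⊤ := by
  simpa only [Pi.add_apply, Pi.neg_apply, neg_add] using
    lintegral_ofReal_add_ne_top_iff (f := -f) hφ.neg

lemma intWellDef_add_iff (hφ : Integrable φ μ) : IntWellDef μ (f + φ) ↔ IntWellDef μ f :=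
  or_congr (lintegral_ofReal_add_ne_top_iff hφ) (lintegral_ofReal_neg_add_ne_top_iff hφ)

lemma integrable_of_lintegral_ofReal_ne_top (hf : AEMeasurable f μ)
    (hpos : ∫⁻ x, ENNReal.ofReal (f x) ∂μ ≠ ⊤) (hneg : ∫⁻ x, ENNReal.ofReal (-f x) ∂μ ≠ ⊤) :
    Integrable f μ := by
  refine ⟨hf.aestronglyMeasurable, lt_of_le_of_lt ?_ (add_ne_top.2 ⟨hpos, hneg⟩).lt_top⟩
  rw [← lintegral_add_left' hf.ennreal_ofReal]
  refine lintegral_mono fun x ↦ ?_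
  rw [Real.enorm_eq_ofReal_abs]
  rcases abs_choice (f x) with h | h <;> simp only [h, le_add_left le_rfl, le_add_right le_rfl]

lemma eInt_eq_coe_integral (hf : Integrable f μ) : eInt μ f = ((∫ x, f x ∂μ : ℝ) : EReal) := by
  have hneg : ∫⁻ x, ENNReal.ofReal (-f x) ∂μ ≠ ⊤ := hf.neg.lintegral_lt_top.ne
  rw [eInt, integral_eq_lintegral_pos_part_sub_lintegral_neg_part hf, EReal.coe_sub,
    EReal.coe_ennreal_toReal hf.lintegral_lt_top.ne, EReal.coe_ennreal_toReal hneg]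

/-- As `⊤ - ⊤ = ⊥` in `EReal`, this also covers the ill-defined integral. -/
lemma eInt_eq_bot (hneg : ∫⁻ x, ENNReal.ofReal (-f x) ∂μ = ⊤) : eInt μ f = ⊥ := by
  rw [eInt, hneg, EReal.coe_ennreal_top, EReal.sub_top]

lemma eInt_eq_top (hpos : ∫⁻ x, ENNReal.ofReal (f x) ∂μ = ⊤)
    (hneg : ∫⁻ x, ENNReal.ofReal (-f x) ∂μ ≠ ⊤) : eInt μ f = ⊤ := by
  rw [eInt, hpos, EReal.coe_ennreal_top, ← EReal.coe_ennreal_toReal hneg, EReal.top_sub_coe]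

lemma eInt_add (hf : AEMeasurable f μ) (hφ : Integrable φ μ) :
    eInt μ (f + φ) = eInt μ f + ((∫ x, φ x ∂μ : ℝ) : EReal) := by
  have hpos_iff := lintegral_ofReal_add_ne_top_iff (f := f) hφ
  have hneg_iff := lintegral_ofReal_neg_add_ne_top_iff (f := f) hφ
  by_cases hneg : ∫⁻ x, ENNReal.ofReal (-f x) ∂μ = ⊤
  · rw [eInt_eq_bot hneg, eInt_eq_bot (by_contra fun h ↦ hneg_iff.1 h hneg), EReal.bot_add]
  by_cases hpos : ∫⁻ x, ENNReal.ofReal (f x) ∂μ = ⊤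
  · rw [eInt_eq_top hpos hneg, eInt_eq_top (by_contra fun h ↦ hpos_iff.1 h hpos)
      (hneg_iff.2 hneg), EReal.top_add_coe]
  · have hf_int := integrable_of_lintegral_ofReal_ne_top hf hpos hneg
    rw [eInt_eq_coe_integral hf_int, eInt_eq_coe_integral (hf_int.add hφ),
      integral_add' hf_int hφ, EReal.coe_add]

end ExtendedIntegral

lemma ereal_coe_add_iSup {ι : Sort*} (a : ℝ) (u : ι → EReal) :
    (a : EReal) + ⨆ i, u i = ⨆ i, (a : EReal) + u i := by
  have hcont : ContinuousAt (fun z : EReal ↦ (a : EReal) + z) (⨆ i, u i) :=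
    ContinuousAt.comp (f := fun z : EReal ↦ ((a : EReal), z))
      (EReal.continuousAt_add (.inl (EReal.coe_ne_top a)) (.inl (EReal.coe_ne_bot a)))
      (by fun_prop)
  exact Monotone.map_iSup_of_continuousAt hcont (fun _ _ h ↦ add_le_add_right h _)
    (EReal.add_bot _)

section KernelEntropy

variable {X Y : Type*} [MeasurableSpace X] [MeasurableSpace Y]

/-- The `κ`-normalized functions: `c` is measurable and `∫ e^{c(x,y)} dκ^y(x) = 1` for all `y`. -/
def IsNormalized (κ : Kernel Y X) (c : X × Y → ℝ) : Prop :=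
  Measurable c ∧ ∀ y, (∫ x, Real.exp (c (x, y)) ∂(κ y)) = 1

/-- The exponentially tilted kernel `e^{φ(x,y)} κ^y(dx)`. Unlike in `Measure.tilted`, the density
is not divided by its mass, so this is a Markov kernel only if `φ` is `κ`-normalized;
for non-measurable `φ`, `Kernel.withDensity` is the junk value `0`. -/
def expTilt (κ : Kernel Y X) [IsSFiniteKernel κ] (φ : X × Y → ℝ) : Kernel Y X :=
  κ.withDensity fun y x ↦ ENNReal.ofReal (Real.exp (φ (x, y)))

lemma Hker_eq_neg_iSup (κ : Kernel Y X) (π : Measure (X × Y)) :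
    Hker κ π = -⨆ (c : X × Y → ℝ) (_ : IsNormalized κ c ∧ IntWellDef π c), eInt π c := by
  have hset : {r : EReal | ∃ c : X × Y → ℝ, Measurable c ∧
      (∀ y, (∫ x, Real.exp (c (x, y)) ∂(κ y)) = 1) ∧ IntWellDef π c ∧ r = eInt π c}
      = eInt π '' {c | IsNormalized κ c ∧ IntWellDef π c} := by
    ext r
    simp only [IsNormalized, Set.mem_ofPred_eq, Set.mem_image, and_assoc, eq_comm]
  rw [Hker, hset, sSup_image]
  rfl

variable {κ : Kernel Y X} [IsSFiniteKernel κ] {φ : X × Y → ℝ}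

lemma integral_exp_expTilt (hφ : Measurable φ) (c : X × Y → ℝ) (y : Y) :
    ∫ x, Real.exp (c (x, y)) ∂(expTilt κ φ y) = ∫ x, Real.exp ((c + φ) (x, y)) ∂(κ y) := by
  have hdensity : Measurable
      (Function.uncurry fun y x ↦ ENNReal.ofReal (Real.exp (φ (x, y)))) := by
    unfold Function.uncurry
    fun_prop
  rw [expTilt, Kernel.withDensity_apply _ hdensity,
    integral_withDensity_eq_integral_toReal_smul (by fun_prop) (by simp)]
  refine integral_congr_ae (.of_forall fun x ↦ ?_)
  simp only [smul_eq_mul, ENNReal.toReal_ofReal (Real.exp_pos _).le, Pi.add_apply, Real.exp_add,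
    mul_comm]

lemma isNormalized_expTilt_iff (hφ : Measurable φ) {c : X × Y → ℝ} :
    IsNormalized (expTilt κ φ) c ↔ IsNormalized κ (c + φ) := by
  have hmeas : Measurable c ↔ Measurable (c + φ) :=
    ⟨fun hc ↦ hc.add hφ, fun hc ↦ by simpa only [add_sub_cancel_right] using hc.sub hφ⟩
  simp only [IsNormalized, integral_exp_expTilt hφ, hmeas]

lemma neg_Hker_expTilt {π : Measure (X × Y)} (hφ : Measurable φ) (hφ_int : Integrable φ π) :
    -Hker (expTilt κ φ) π = -((∫ p, φ p ∂π : ℝ) : EReal) + -Hker κ π := by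
  have hiff (c : X × Y → ℝ) : IsNormalized (expTilt κ φ) c ∧ IntWellDef π c ↔
      IsNormalized κ (c + φ) ∧ IntWellDef π (c + φ) :=
    and_congr (isNormalized_expTilt_iff hφ) (intWellDef_add_iff hφ_int).symm
  have hshift (c : X × Y → ℝ) (hc : Measurable (c + φ)) :
      eInt π c = ((-∫ p, φ p ∂π : ℝ) : EReal) + eInt π (c + φ) := by
    have h := eInt_add hc.aemeasurable hφ_int.neg
    rwa [add_neg_cancel_right, integral_neg', add_comm] at h
  rw [← EReal.coe_neg, Hker_eq_neg_iSup, Hker_eq_neg_iSup, neg_neg, neg_neg]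
  calc ⨆ (c : X × Y → ℝ) (_ : IsNormalized (expTilt κ φ) c ∧ IntWellDef π c), eInt π c
      = ⨆ (c : X × Y → ℝ) (_ : IsNormalized κ (c + φ) ∧ IntWellDef π (c + φ)),
          ((-∫ p, φ p ∂π : ℝ) : EReal) + eInt π (c + φ) :=
        iSup_congr fun c ↦ iSup_congr_Prop (hiff c) fun h ↦ hshift c h.1.1
    _ = ⨆ (c : X × Y → ℝ) (_ : IsNormalized κ c ∧ IntWellDef π c),
          ((-∫ p, φ p ∂π : ℝ) : EReal) + eInt π c :=
        (Equiv.addRight φ).iSup_comp (g := fun c ↦ ⨆ _ : IsNormalized κ c ∧ IntWellDef π c,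
          ((-∫ p, φ p ∂π : ℝ) : EReal) + eInt π c)
    _ = ((-∫ p, φ p ∂π : ℝ) : EReal) +
          ⨆ (c : X × Y → ℝ) (_ : IsNormalized κ c ∧ IntWellDef π c), eInt π c := by
        simp only [ereal_coe_add_iSup]

end KernelEntropy

theorem statement10_general {X Y : Type*} [MeasurableSpace X] [MeasurableSpace Y]
    (κ : Kernel Y X) [IsSFiniteKernel κ] (π : Measure (X × Y))
    (φ : X × Y → ℝ) (hφ : Measurable φ) (hφ_int : Integrable φ π) :
    -Hker (expTilt κ φ) π = -((∫ p, φ p ∂π : ℝ) : EReal) + -Hker κ π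
    ∧ Hker (expTilt κ φ) π = ((∫ p, φ p ∂π : ℝ) : EReal) + Hker κ π := by
  have hgain := neg_Hker_expTilt (κ := κ) hφ hφ_int
  refine ⟨hgain, neg_injective ?_⟩
  rw [hgain, EReal.neg_add (.inl (EReal.coe_ne_bot _)) (.inl (EReal.coe_ne_top _)),
    sub_eq_add_neg]

/-- for a bounded measurable `ν̂`-normalized `φ₀` and the kernel
`μ̂^y(dx) = e^{φ₀(x,y)} ν̂^y(dx)`, one has `IG(π, μ̂) = −∫ φ₀ dπ + IG(π, ν̂)`;
equivalently `H^{μ̂}(π) = ∫ φ₀ dπ + H^{ν̂}(π)`. -/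
theorem statement10 {X Y : Type*} [MeasurableSpace X] [MeasurableSpace Y]
    (κ : Kernel Y X) [IsMarkovKernel κ]
    (pi : Measure (X × Y)) [IsProbabilityMeasure pi]
    (φ₀ : X × Y → ℝ) (hm : Measurable φ₀) (hb : ∃ C, ∀ p, |φ₀ p| ≤ C)
    (hnorm : ∀ y, (∫ x, Real.exp (φ₀ (x, y)) ∂(κ y)) = 1) :
    - Hker (κ.withDensity (fun y x => ENNReal.ofReal (Real.exp (φ₀ (x, y))))) pi
      = - ((∫ p, φ₀ p ∂pi : ℝ) : EReal) + (- Hker κ pi)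
    ∧ Hker (κ.withDensity (fun y x => ENNReal.ofReal (Real.exp (φ₀ (x, y))))) pi
      = ((∫ p, φ₀ p ∂pi : ℝ) : EReal) + Hker κ pi := by
  obtain ⟨C, hC⟩ := hb
  exact statement10_general κ pi φ₀ hm (.of_bound hm.aestronglyMeasurable C (.of_forall hC))

end
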